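/- (Linearized Donsker–Varadhan bound, the objective of Eq. 6 of the paper.) Let P and Q be probability measures on a measurable space X with P absolutely continuous with respect to Q and with finite Kullback–Leibler divergence. Let f : X → ℝ be measurable with 0 < c ≤ f(x) ≤ C < ∞ for all x, and let a > 0. Then ∫ log f dP − (∫ f dQ)/a − log a + 1 ≤ D_KL(P‖Q). -/

import Mathlib

open MeasureTheory

/-- The Kullback–Leibler divergence `∫ log (dP/dQ) dP`. -/
noncomputable def klDiv {X : Type*} [MeasurableSpace X]
    (P Q : Measure X) : ℝ :=
  ∫ x, Real.log ((P.rnDeriv Q x).toReal) ∂P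

/-!
Tilting `Q` by `T = log f` changes the divergence of `P` from `Q` explicitly,
`D(P‖Q_T) = D(P‖Q) - ∫ T dP + log ∫ exp T dQ`, so Gibbs' inequality `0 ≤ D(P‖Q_T)` is the
Donsker–Varadhan inequality. Its term `log ∫ exp T dQ` is then bounded by the tangent line of the
concave function `log` at `a`.
-/

theorem log_le_div_add_log_sub_one {y a : ℝ} (hy : 0 < y) (ha : 0 < a) :
    Real.log y ≤ y / a + Real.log a - 1 := by
  have log_ratio_le := Real.log_le_sub_one_of_pos (div_pos hy ha)
  rw [Real.log_div hy.ne' ha.ne'] at log_ratio_le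
  linarith

section

variable {X : Type*} [MeasurableSpace X] {P Q : Measure X}

theorem klDiv_nonneg [IsFiniteMeasure P] [IsFiniteMeasure Q] (hPQ : P ≪ Q)
    (h_univ : P Set.univ = Q Set.univ) : 0 ≤ klDiv P Q :=
  ENNReal.toReal_nonneg.trans_eq (InformationTheory.toReal_klDiv_of_measure_eq hPQ h_univ)

theorem neZero_of_absolutelyContinuous [NeZero P] (hPQ : P ≪ Q) : NeZero Q :=
  ⟨fun hQ => NeZero.ne P (Measure.absolutelyContinuous_zero_iff.mp (hQ ▸ hPQ))⟩

theorem integrable_log_of_mem_Icc [IsFiniteMeasure P] {f : X → ℝ} {c C : ℝ}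
    (hf : AEMeasurable f P) (hc : 0 < c) (hfcC : ∀ᵐ x ∂P, f x ∈ Set.Icc c C) :
    Integrable (fun x => Real.log (f x)) P := by
  refine .of_mem_Icc (Real.log c) (Real.log C) hf.log ?_
  filter_upwards [hfcC] with x ⟨hcx, hxC⟩
  exact ⟨Real.log_le_log hc hcx, Real.log_le_log (hc.trans_le hcx) hxC⟩

variable [IsProbabilityMeasure P] [SigmaFinite Q]

theorem klDiv_tilted_right (hPQ : P ≪ Q) (hKL : Integrable (llr P Q) P) {T : X → ℝ}
    (hT : Integrable T P) (hexpT : Integrable (fun x => Real.exp (T x)) Q) :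
    klDiv P (Q.tilted T) = klDiv P Q - ∫ x, T x ∂P + Real.log (∫ x, Real.exp (T x) ∂Q) :=
  integral_llr_tilted_right hPQ hT hexpT hKL

theorem integral_sub_log_integral_exp_le_klDiv (hPQ : P ≪ Q) (hKL : Integrable (llr P Q) P)
    {T : X → ℝ} (hT : Integrable T P) (hexpT : Integrable (fun x => Real.exp (T x)) Q) :
    ∫ x, T x ∂P - Real.log (∫ x, Real.exp (T x) ∂Q) ≤ klDiv P Q := by
  have : NeZero Q := neZero_of_absolutelyContinuous hPQ
  have : IsProbabilityMeasure (Q.tilted T) := isProbabilityMeasure_tilted hexpT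
  have gibbs : 0 ≤ klDiv P (Q.tilted T) :=
    klDiv_nonneg (hPQ.trans (absolutelyContinuous_tilted hexpT))
      (measure_univ.trans measure_univ.symm)
  rw [klDiv_tilted_right hPQ hKL hT hexpT] at gibbs
  linarith

theorem linearized_donsker_varadhan_bound_general (hPQ : P ≪ Q) (hKL : Integrable (llr P Q) P)
    {f : X → ℝ} (hf_pos : ∀ᵐ x ∂Q, 0 < f x) (hf : Integrable f Q)
    (hlogf : Integrable (fun x => Real.log (f x)) P) {a : ℝ} (ha : 0 < a) :
    ∫ x, Real.log (f x) ∂P - (∫ x, f x ∂Q) / a - Real.log a + 1 ≤ klDiv P Q := by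
  have : NeZero Q := neZero_of_absolutelyContinuous hPQ
  have exp_log_f : (fun x => Real.exp (Real.log (f x))) =ᵐ[Q] f :=
    hf_pos.mono fun _ => Real.exp_log
  have hexp : Integrable (fun x => Real.exp (Real.log (f x))) Q := hf.congr exp_log_f.symm
  have donsker_varadhan := integral_sub_log_integral_exp_le_klDiv hPQ hKL hlogf hexp
  have tangent_line := log_le_div_add_log_sub_one (integral_exp_pos hexp) ha
  rw [integral_congr_ae exp_log_f] at donsker_varadhan tangent_line
  linarith

end

/-- Linearized Donsker–Varadhan bound: for measurable `f` bounded between positive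
constants and any `a > 0`, `∫ log f dP − (∫ f dQ)/a − log a + 1 ≤ D_KL(P‖Q)`. -/
theorem linearized_donsker_varadhan_bound
    {X : Type*} [MeasurableSpace X] (P Q : Measure X)
    [IsProbabilityMeasure P] [IsProbabilityMeasure Q]
    (hPQ : P ≪ Q)
    (hKL : Integrable (fun x => Real.log ((P.rnDeriv Q x).toReal)) P)
    (f : X → ℝ) (hf : Measurable f) (c C : ℝ) (hc : 0 < c)
    (hfc : ∀ x, c ≤ f x) (hfC : ∀ x, f x ≤ C)
    (a : ℝ) (ha : 0 < a) :
    ∫ x, Real.log (f x) ∂P - (∫ x, f x ∂Q) / a - Real.log a + 1 ≤ klDiv P Q := by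
  have hf_mem : ∀ x, f x ∈ Set.Icc c C := fun x => ⟨hfc x, hfC x⟩
  exact linearized_donsker_varadhan_bound_general hPQ hKL
    (ae_of_all Q fun x => hc.trans_le (hfc x))
    (.of_mem_Icc c C hf.aemeasurable (ae_of_all Q hf_mem))
    (integrable_log_of_mem_Icc hf.aemeasurable hc (ae_of_all P hf_mem)) ha
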